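/- Fix α ∈ [0,1], τ ∈ (0,1), and γ ∈ ℝ with γ > −1 and γ ≠ α, and let {f_θ : θ ∈ Θ} be a parametric family of densities, each positive μ-a.e. If the true density is g = f_{θ₀} for some θ₀ ∈ Θ, then the minimum GSD functional exists at g and equals θ₀: Q_{(α,γ,τ)}(f_{θ₀}, f_{θ₀}) = 0 ≤ Q_{(α,γ,τ)}(f_{θ₀}, f_θ) for every θ ∈ Θ. If moreover the family is identifiable (i.e., f_θ = f_{θ'} μ-a.e. implies θ = θ'), then θ₀ is the unique minimizer of θ ↦ Q_{(α,γ,τ)}(f_{θ₀}, f_θ); i.e., the minimum GSD functional is Fisher consistent on the model. -/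

import Mathlib

/-!
The integrand of the divergence is a pointwise Jensen gap. For `r = g / f > 0`, put
`u = r ^ (1 + γ)` and `p = (1 + α) / (1 + γ) > 0`, so that `u ^ p = r ^ (1 + α)`. The power
`t ↦ t ^ p` is strictly convex on `[0, ∞)` when `γ < α` and strictly concave when `α < γ`, and
dividing by `α - γ` makes the gap between `u` and `1` positive in both cases unless `u = 1`, i.e.
`r = 1` (`Cfun_pos`). Hence the divergence of a positive density from itself vanishes
(`Qlin_self`), which is the least value in `[0, ∞]`; any other minimizer has divergence zero too,
so its density agrees almost everywhere with the true one (`ae_eq_of_Qlin_eq_zero`).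
-/

open MeasureTheory Real
open scoped ENNReal

noncomputable section

/-- `g` is a probability density with respect to `μ`. -/
def IsDensity {X : Type*} [MeasurableSpace X] (μ : Measure X) (g : X → ℝ) : Prop :=
  Measurable g ∧ (∀ x, 0 ≤ g x) ∧ ∫ x, g x ∂μ = 1

/-- The generating function of the generalized S-divergence. -/
def Cfun (α γ τ : ℝ) (δ : ℝ) : ℝ :=
  (1 / (τ * (1 - τ) * (α - γ))) *
    ((τ * (δ + 1) ^ (1 + α) + (1 - τ))
      - (τ * (δ + 1) ^ (1 + γ) + (1 - τ)) ^ ((1 + α) / (1 + γ)))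

/-- The generalized S-divergence Q_{(α,γ,τ)}(g,f), as an integral in [0,∞]. -/
def Qlin {X : Type*} [MeasurableSpace X] (μ : Measure X) (α γ τ : ℝ) (g f : X → ℝ) : ℝ≥0∞ :=
  ∫⁻ x, ENNReal.ofReal (Cfun α γ τ (g x / f x - 1) * f x ^ (1 + α)) ∂μ

/-- Strict Jensen inequality behind the divergence. With `u = r ^ (1 + γ)` and
`p = (1 + α) / (1 + γ)`, the bracket in `Cfun` is `τ u ^ p + (1 - τ) 1 ^ p - (τ u + (1 - τ) 1) ^ p`,
which has the sign of `p - 1`, that is, of `α - γ`. -/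
lemma Cfun_pos {α γ τ r : ℝ} (hα : 0 ≤ α) (hτ : τ ∈ Set.Ioo (0 : ℝ) 1)
    (hγ : -1 < γ) (hγα : γ ≠ α) (hr : 0 < r) (hr1 : r ≠ 1) :
    0 < Cfun α γ τ (r - 1) := by
  obtain ⟨hτ0, hτ1⟩ := hτ
  have hγ' : 0 < 1 + γ := by linarith
  have hττ : 0 < τ * (1 - τ) := mul_pos hτ0 (by linarith)
  have hu : 0 < r ^ (1 + γ) := Real.rpow_pos_of_pos hr _
  have hu1 : r ^ (1 + γ) ≠ 1 := fun h =>
    hr1 ((Real.rpow_left_inj hr.le zero_le_one hγ'.ne').1 (h.trans (Real.one_rpow _).symm))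
  have hup : (r ^ (1 + γ)) ^ ((1 + α) / (1 + γ)) = r ^ (1 + α) := by
    rw [← Real.rpow_mul hr.le, mul_div_cancel₀ _ hγ'.ne']
  have hp0 : 0 < (1 + α) / (1 + γ) := by positivity
  unfold Cfun
  rw [sub_add_cancel]
  rcases lt_or_gt_of_ne hγα with h | h
  · have hp : 1 < (1 + α) / (1 + γ) := by rw [one_lt_div hγ']; linarith
    have key := (strictConvexOn_rpow hp).2 (Set.mem_Ici.2 hu.le)
      (Set.mem_Ici.2 zero_le_one) hu1 hτ0 (sub_pos.2 hτ1) (by ring)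
    simp only [smul_eq_mul, mul_one, Real.one_rpow, hup] at key
    exact mul_pos (one_div_pos.2 (mul_pos hττ (sub_pos.2 h))) (sub_pos.2 key)
  · have hp : (1 + α) / (1 + γ) < 1 := by rw [div_lt_one hγ']; linarith
    have key := (Real.strictConcaveOn_rpow hp0 hp).2 (Set.mem_Ici.2 hu.le)
      (Set.mem_Ici.2 zero_le_one) hu1 hτ0 (sub_pos.2 hτ1) (by ring)
    simp only [smul_eq_mul, mul_one, Real.one_rpow, hup] at key
    exact mul_pos_of_neg_of_neg
      (one_div_neg.2 (mul_neg_of_pos_of_neg hττ (sub_neg.2 h))) (sub_neg.2 key)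

lemma Cfun_zero (α γ τ : ℝ) : Cfun α γ τ 0 = 0 := by
  simp [Cfun]

lemma measurable_Cfun (α γ τ : ℝ) : Measurable (Cfun α γ τ) := by
  unfold Cfun
  fun_prop

lemma Qlin_self {X : Type*} [MeasurableSpace X] (μ : Measure X) (α γ τ : ℝ) {f : X → ℝ}
    (hf : ∀ᵐ x ∂μ, 0 < f x) : Qlin μ α γ τ f f = 0 := by
  unfold Qlin
  rw [← lintegral_zero (μ := μ)]
  refine lintegral_congr_ae ?_
  filter_upwards [hf] with x hx
  simp [div_self hx.ne', Cfun_zero]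

lemma ae_eq_of_Qlin_eq_zero {X : Type*} [MeasurableSpace X] {μ : Measure X} {α γ τ : ℝ}
    {f g : X → ℝ} (hα : 0 ≤ α) (hτ : τ ∈ Set.Ioo (0 : ℝ) 1) (hγ : -1 < γ) (hγα : γ ≠ α)
    (hgm : Measurable g) (hfm : Measurable f)
    (hg : ∀ᵐ x ∂μ, 0 < g x) (hf : ∀ᵐ x ∂μ, 0 < f x)
    (hQ : Qlin μ α γ τ g f = 0) : f =ᵐ[μ] g := by
  have hm : Measurable fun x =>
      ENNReal.ofReal (Cfun α γ τ (g x / f x - 1) * f x ^ (1 + α)) :=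
    (((measurable_Cfun α γ τ).comp ((hgm.div hfm).sub_const 1)).mul
      (hfm.pow_const _)).ennreal_ofReal
  unfold Qlin at hQ
  rw [lintegral_eq_zero_iff hm] at hQ
  filter_upwards [hQ, hg, hf] with x hx hgx hfx
  by_contra hne
  have hr1 : g x / f x ≠ 1 := fun h => hne ((div_eq_one_iff_eq hfx.ne').1 h).symm
  have hC := Cfun_pos hα hτ hγ hγα (div_pos hgx hfx) hr1
  exact absurd (ENNReal.ofReal_eq_zero.1 hx)
    (not_le.2 (mul_pos hC (Real.rpow_pos_of_pos hfx _)))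

/-- if the true density is `f_{θ₀}`, the minimum GSD functional exists and
equals θ₀; under identifiability it is the unique minimizer (Fisher consistency). -/
theorem minimum_GSD_functional_Fisher_consistent
    {X : Type*} [MeasurableSpace X] (μ : Measure X) [SigmaFinite μ]
    (α γ τ : ℝ) (hα : α ∈ Set.Icc (0 : ℝ) 1) (hτ : τ ∈ Set.Ioo (0 : ℝ) 1)
    (hγ : -1 < γ) (hγα : γ ≠ α)
    {Θ : Type*} (fθ : Θ → X → ℝ)
    (hdens : ∀ θ, IsDensity μ (fθ θ))
    (hpos : ∀ θ, ∀ᵐ x ∂μ, 0 < fθ θ x)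
    (θ₀ : Θ) :
    Qlin μ α γ τ (fθ θ₀) (fθ θ₀) = 0 ∧
    (∀ θ, Qlin μ α γ τ (fθ θ₀) (fθ θ₀) ≤ Qlin μ α γ τ (fθ θ₀) (fθ θ)) ∧
    ((∀ θ θ', fθ θ =ᵐ[μ] fθ θ' → θ = θ') →
      ∀ θ, (∀ θ', Qlin μ α γ τ (fθ θ₀) (fθ θ) ≤ Qlin μ α γ τ (fθ θ₀) (fθ θ')) → θ = θ₀) := by
  have h0 : Qlin μ α γ τ (fθ θ₀) (fθ θ₀) = 0 := Qlin_self μ α γ τ (hpos θ₀)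
  refine ⟨h0, fun θ => h0 ▸ zero_le, fun hid θ hmin => hid _ _ ?_⟩
  exact ae_eq_of_Qlin_eq_zero hα.1 hτ hγ hγα (hdens θ₀).1 (hdens θ).1 (hpos θ₀) (hpos θ)
    (le_antisymm ((hmin θ₀).trans h0.le) zero_le)

end
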